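/- (Proposition 3: fast time-scale feasibility.) Let Ξ be convex, let the fast time-scale disturbance process satisfy quasi-stationarity, and suppose the decentralized affine policy is feasible for the slow time-scale robust constraints: for every ξ = (1, ξ(0), …, ξ(T−1)) ∈ Ξ and every t = 0,…,T−1, (i) v̲² ≤ V_u·u(t;ξ) + V_ξ·ξ(t) + v₀²·𝟏 ≤ v̄² componentwise; (ii) for each i = 1,…,n, (S_q u(t;ξ))_i² + (S_I ξ(t))_i² ≤ (s_i^I)²; (iii) p̲^S ≤ S_p·u(t;ξ) ≤ p̄^S componentwise; and (iv) 0 ≤ x(t;ξ) ≤ b componentwise for t = 0,…,T. Then for every realization of the fast time-scale disturbance process satisfying quasi-stationarity, the fast time-scale trajectories satisfy, for every t = 0,…,T−1 and k = 0,…,K−1: v̲² ≤ V_u·u(k,t) + V_ξ·ξ(k,t) + v₀²·𝟏 ≤ v̄²; (S_q u(k,t))_i² + (S_I ξ(k,t))_i² ≤ (s_i^I)² for each i; p̲^S ≤ S_p·u(k,t) ≤ p̄^S; and 0 ≤ x(k,t) ≤ b for k = 0,…,K. -/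

import Mathlib

/-- Slow time-scale average `ξ̄(t) = (1/K)·Σ_{ℓ=0}^{K−1} ξ(ℓ,t)` of a fast
time-scale disturbance process `ξ(k,t)`. -/
noncomputable def slowAvg {ι : Type*} (K : ℕ) (ξ : ℕ → ℕ → ι → ℝ) (t : ℕ) :
    ι → ℝ :=
  (K : ℝ)⁻¹ • ∑ ℓ ∈ Finset.range K, ξ ℓ t

/-- Slow time-scale affine input `u(t;ξ) = ū(t) + Σ_{s=0}^{t} Q(t,s) ξ(s)`.
Inputs live in `ℝ^{2n} ≃ (Fin n × Fin 2 → ℝ)` and disturbance blocks in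
`ℝ^{3n} ≃ (Fin n × Fin 3 → ℝ)`. -/
def uslow {n : ℕ} (ubar : ℕ → Fin n × Fin 2 → ℝ)
    (Q : ℕ → ℕ → Matrix (Fin n × Fin 2) (Fin n × Fin 3) ℝ)
    (ζ : ℕ → Fin n × Fin 3 → ℝ) (t : ℕ) : Fin n × Fin 2 → ℝ :=
  ubar t + ∑ s ∈ Finset.range (t + 1), (Q t s).mulVec (ζ s)

/-- Fast time-scale input
`u(k,t) = ū(t) + Q(t,t) ξ(k,t) + Σ_{s=0}^{t−1} Q(t,s) ξ̄(s)`. -/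
noncomputable def ufast {n : ℕ} (K : ℕ) (ubar : ℕ → Fin n × Fin 2 → ℝ)
    (Q : ℕ → ℕ → Matrix (Fin n × Fin 2) (Fin n × Fin 3) ℝ)
    (ξ : ℕ → ℕ → Fin n × Fin 3 → ℝ) (k t : ℕ) : Fin n × Fin 2 → ℝ :=
  ubar t + (Q t t).mulVec (ξ k t)
    + ∑ s ∈ Finset.range t, (Q t s).mulVec (slowAvg K ξ s)

/-- `V_u = R ⊗ [1, 0] + X ⊗ [0, 1] ∈ ℝ^{n×2n}` (Kronecker product written
entrywise). -/
def Vu (n : ℕ) (R X : Matrix (Fin n) (Fin n) ℝ) :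
    Matrix (Fin n) (Fin n × Fin 2) ℝ :=
  Matrix.of fun i p => R i p.1 * ![(1 : ℝ), 0] p.2 + X i p.1 * ![(0 : ℝ), 1] p.2

/-- `V_ξ = R ⊗ [−1, 0, 1] − X ⊗ [0, 1, 0] ∈ ℝ^{n×3n}` (Kronecker product
written entrywise). -/
def Vxi (n : ℕ) (R X : Matrix (Fin n) (Fin n) ℝ) :
    Matrix (Fin n) (Fin n × Fin 3) ℝ :=
  Matrix.of fun i p =>
    R i p.1 * ![(-1 : ℝ), 0, 1] p.2 - X i p.1 * ![(0 : ℝ), 1, 0] p.2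

/-- Selection matrix `S_p = I_n ⊗ [1, 0] ∈ ℝ^{n×2n}` extracting the storage
active power coordinates of the input. -/
def Smp (n : ℕ) : Matrix (Fin n) (Fin n × Fin 2) ℝ :=
  Matrix.of fun i p => (if i = p.1 then (1 : ℝ) else 0) * ![(1 : ℝ), 0] p.2

/-- Selection matrix `S_q = I_n ⊗ [0, 1] ∈ ℝ^{n×2n}` extracting the inverter
reactive power coordinates of the input. -/
def Smq (n : ℕ) : Matrix (Fin n) (Fin n × Fin 2) ℝ :=
  Matrix.of fun i p => (if i = p.1 then (1 : ℝ) else 0) * ![(0 : ℝ), 1] p.2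

/-- Selection matrix `S_I = I_n ⊗ [0, 0, 1] ∈ ℝ^{n×3n}` extracting the PV
active power coordinates of a disturbance block. -/
def SmI (n : ℕ) : Matrix (Fin n) (Fin n × Fin 3) ℝ :=
  Matrix.of fun i p => (if i = p.1 then (1 : ℝ) else 0) * ![(0 : ℝ), 0, 1] p.2

/-- `B = I_n ⊗ [−Δ, 0] ∈ ℝ^{n×2n}`. -/
def Bmat (n : ℕ) (Δ : ℝ) : Matrix (Fin n) (Fin n × Fin 2) ℝ :=
  Matrix.of fun i p => (if i = p.1 then (1 : ℝ) else 0) * ![-Δ, (0 : ℝ)] p.2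

/-- Slow time-scale state `x(t;ξ) = x(0) + B·Σ_{s=0}^{t−1} u(s;ξ)`. -/
def xslow {n : ℕ} (Δ : ℝ) (x0 : Fin n → ℝ)
    (ubar : ℕ → Fin n × Fin 2 → ℝ)
    (Q : ℕ → ℕ → Matrix (Fin n × Fin 2) (Fin n × Fin 3) ℝ)
    (ζ : ℕ → Fin n × Fin 3 → ℝ) (t : ℕ) : Fin n → ℝ :=
  x0 + (Bmat n Δ).mulVec (∑ s ∈ Finset.range t, uslow ubar Q ζ s)

/-!
Let `ξ̄` be the profile of slow time-scale averages, and let `ζ` agree with `ξ̄` except at time `t`,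
where it takes the sample `ξ(k,t)`. Every block of `ξ̄` and of `ζ` is a convex combination of
samples, so quasi-stationarity and convexity of `Ξ` put both profiles in `Ξ`. Under `ζ` the policy
sees averages before time `t` and the sample `ξ(k,t)` at time `t`, so `u(t;ζ) = u(k,t)`. Hence every
slow time-scale constraint on the input and the disturbance at time `t` passes to the fast
time-scale, whatever its shape.

The policy is affine, so the fast inputs over period `t` average to `u(t;ξ̄)`, and therefore
`x(0,t) = x(t;ξ̄)`. Within the period, `x(k,t) = x(0,t) + (1/K) Σ_{j<k} (y(j) - x(0,t))`, where
`y(j)` is the slow time-scale state at time `t + 1` under the profile built from `ξ̄` and the sample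
`ξ(j,t)`. This exhibits `x(k,t)` as a convex combination of slow time-scale states.
-/

open Finset Matrix

section Convexity

lemma convexHull_prod_pi_subset {𝕜 ι F : Type*} {E : ι → Type*} [Field 𝕜] [LinearOrder 𝕜]
    [IsStrictOrderedRing 𝕜] [Finite ι] [AddCommGroup F] [Module 𝕜 F] [∀ i, AddCommGroup (E i)]
    [∀ i, Module 𝕜 (E i)] {C : Set (F × ∀ i, E i)} (hC : Convex 𝕜 C) {B : Set F} {I : Set ι}
    {A : ∀ i, Set (E i)} (hBA : B ×ˢ I.pi A ⊆ C) :
    convexHull 𝕜 B ×ˢ (I.pi fun i => convexHull 𝕜 (A i)) ⊆ C := by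
  rw [← convexHull_pi, ← convexHull_prod]
  exact convexHull_min hBA hC

lemma add_sum_smul_sub_mem_of_convex {𝕜 ι E : Type*} [Field 𝕜] [LinearOrder 𝕜]
    [IsStrictOrderedRing 𝕜] [AddCommGroup E] [Module 𝕜 E] {C : Set E} (hC : Convex 𝕜 C)
    {s : Finset ι} {w : ι → 𝕜} {y : ι → E} {z : E} (hw : ∀ j ∈ s, 0 ≤ w j)
    (hw_sum : ∑ j ∈ s, w j ≤ 1) (hz : z ∈ C) (hy : ∀ j ∈ s, y j ∈ C) :
    z + ∑ j ∈ s, w j • (y j - z) ∈ C := by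
  have hmem : ∑ o ∈ insertNone s, o.elim (1 - ∑ j ∈ s, w j) w • o.elim z y ∈ C :=
    hC.sum_mem (forall_mem_insertNone.2 ⟨sub_nonneg.2 hw_sum, hw⟩) (by simp)
      (forall_mem_insertNone.2 ⟨hz, hy⟩)
  convert hmem using 1
  simp only [sum_insertNone, Option.elim, smul_sub, sum_sub_distrib, sub_smul, one_smul, sum_smul]
  abel

end Convexity

section QuasiStationarity

/-- Quasi-stationarity (Assumption 2): every profile that picks one fast time-scale sample per
period is an admissible slow time-scale disturbance. Only the values of `f` below the horizon `T`
matter. -/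
def IsQuasiStationary {E : Type*} {T : ℕ} (K : ℕ) (Ξ : Set (ℝ × (Fin T → E)))
    (ξ : ℕ → ℕ → E) : Prop :=
  ∀ f : ℕ → ℕ, (∀ t, f t < K) → ((1 : ℝ), fun t : Fin T => ξ (f t) t) ∈ Ξ

/-- The slow time-scale disturbance profile `ζ` of the main argument: sample `k` at time `t`, and
the slow time-scale averages at all other times. -/
noncomputable def spliceSample {ι : Type*} (K : ℕ) (ξ : ℕ → ℕ → ι → ℝ) (k t : ℕ) :
    ℕ → ι → ℝ :=
  Function.update (slowAvg K ξ) t (ξ k t)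

lemma IsQuasiStationary.mem_of_forall_mem_convexHull {E : Type*} [AddCommGroup E] [Module ℝ E]
    {T K : ℕ} {Ξ : Set (ℝ × (Fin T → E))} {ξ : ℕ → ℕ → E} (hξ : IsQuasiStationary K Ξ ξ)
    (hK : 0 < K) (hΞ : Convex ℝ Ξ) {ζ : Fin T → E}
    (hζ : ∀ t : Fin T, ζ t ∈ convexHull ℝ ((ξ · t) '' Set.Iio K)) : ((1 : ℝ), ζ) ∈ Ξ := by
  refine convexHull_prod_pi_subset hΞ (B := {1}) (I := Set.univ)
    (A := fun t : Fin T => (ξ · t) '' Set.Iio K) ?_ ⟨subset_convexHull ℝ _ rfl, fun t _ => hζ t⟩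
  rintro ⟨_, z⟩ ⟨rfl, hz⟩
  have hsample : ∀ t, ∃ k < K, ∀ ht : t < T, ξ k t = z ⟨t, ht⟩ := by
    intro t
    by_cases ht : t < T
    · obtain ⟨k, hk, hkz⟩ := hz ⟨t, ht⟩ trivial
      exact ⟨k, hk, fun _ => hkz⟩
    · exact ⟨0, hK, fun ht' => absurd ht' ht⟩
  choose f hf hfz using hsample
  simpa only [hfz _ (Fin.is_lt _)] using hξ f hf

variable {ι : Type*} {T K : ℕ} {Ξ : Set (ℝ × (Fin T → ι → ℝ))} {ξ : ℕ → ℕ → ι → ℝ}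

variable (ξ) in
lemma slowAvg_mem_convexHull (hK : 0 < K) (t : ℕ) :
    slowAvg K ξ t ∈ convexHull ℝ ((ξ · t) '' Set.Iio K) := by
  have hK' : (K : ℝ) ≠ 0 := by positivity
  rw [slowAvg, smul_sum]
  exact (convex_convexHull ℝ _).sum_mem (fun _ _ => by positivity) (by simp [hK'])
    fun k hk => subset_convexHull ℝ _ ⟨k, mem_range.1 hk, rfl⟩

lemma IsQuasiStationary.slowAvg_mem (hξ : IsQuasiStationary K Ξ ξ) (hK : 0 < K)
    (hΞ : Convex ℝ Ξ) : ((1 : ℝ), fun t : Fin T => slowAvg K ξ t) ∈ Ξ :=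
  hξ.mem_of_forall_mem_convexHull hK hΞ fun t => slowAvg_mem_convexHull ξ hK t

lemma IsQuasiStationary.spliceSample_mem (hξ : IsQuasiStationary K Ξ ξ) (hΞ : Convex ℝ Ξ)
    {k : ℕ} (hk : k < K) (t : ℕ) :
    ((1 : ℝ), fun s : Fin T => spliceSample K ξ k t s) ∈ Ξ := by
  have hK : 0 < K := k.zero_le.trans_lt hk
  refine hξ.mem_of_forall_mem_convexHull hK hΞ fun s => ?_
  obtain rfl | hs := eq_or_ne (s : ℕ) t
  · rw [spliceSample, Function.update_self]
    exact subset_convexHull ℝ _ ⟨k, hk, rfl⟩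
  · rw [spliceSample, Function.update_of_ne hs]
    exact slowAvg_mem_convexHull ξ hK s

end QuasiStationarity

section FastTrajectory

/-- The fast time-scale state recursion over the periods `t < T`, started at `x0` and driven by the
increments `d k t`, which stand for `B u(k,t)`. The argument order `x k t` is that of `x(k,t)`. -/
structure IsFastTrajectory {E : Type*} [AddCommGroup E] [Module ℝ E] (T K : ℕ) (x0 : E)
    (d x : ℕ → ℕ → E) : Prop where
  init : x 0 0 = x0
  step : ∀ t < T, ∀ k < K, x (k + 1) t = x k t + (K : ℝ)⁻¹ • d k t
  boundary : ∀ t, t + 1 < T → x 0 (t + 1) = x K t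

namespace IsFastTrajectory

variable {E : Type*} [AddCommGroup E] [Module ℝ E] {T K : ℕ} {x0 : E} {d x : ℕ → ℕ → E}

lemma eq_add_sum_range (hx : IsFastTrajectory T K x0 d x) {k t : ℕ} (ht : t < T) (hk : k ≤ K) :
    x k t = x 0 t + ∑ j ∈ range k, (K : ℝ)⁻¹ • d j t := by
  rw [eq_sum_range_sub (x · t) k]
  congr 1
  refine sum_congr rfl fun j hj => ?_
  rw [hx.step t ht j ((mem_range.1 hj).trans_le hk), add_sub_cancel_left]

lemma zero_eq_add_sum_average (hx : IsFastTrajectory T K x0 d x) {t : ℕ} (ht : t < T) :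
    x 0 t = x0 + ∑ s ∈ range t, (K : ℝ)⁻¹ • ∑ k ∈ range K, d k s := by
  induction t with
  | zero => rw [hx.init, range_zero, sum_empty, add_zero]
  | succ t ih =>
    have ht' : t < T := t.lt_succ_self.trans ht
    rw [hx.boundary t ht, hx.eq_add_sum_range ht' le_rfl, ih ht', sum_range_succ, add_assoc,
      smul_sum]

lemma mem_of_convex (hx : IsFastTrajectory T K x0 d x) {S : Set E} (hS : Convex ℝ S) {k t : ℕ}
    (ht : t < T) (hk : k ≤ K) (hstart : x 0 t ∈ S) (hfull : ∀ j < K, x 0 t + d j t ∈ S) :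
    x k t ∈ S := by
  have hweights : ∑ _j ∈ range k, (K : ℝ)⁻¹ ≤ 1 := by
    rw [sum_const, card_range, nsmul_eq_mul, ← div_eq_mul_inv]
    exact div_le_one_of_le₀ (by exact_mod_cast hk) K.cast_nonneg
  have hmem := add_sum_smul_sub_mem_of_convex hS (fun _ _ => by positivity) hweights hstart
    fun j hj => hfull j ((mem_range.1 hj).trans_le hk)
  simpa only [add_sub_cancel_left, ← hx.eq_add_sum_range ht hk] using hmem

end IsFastTrajectory

end FastTrajectory

section Policy

variable {n : ℕ} {K : ℕ} (ubar : ℕ → Fin n × Fin 2 → ℝ)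
  (Q : ℕ → ℕ → Matrix (Fin n × Fin 2) (Fin n × Fin 3) ℝ) (ξ : ℕ → ℕ → Fin n × Fin 3 → ℝ)
  (Δ : ℝ) (x0 : Fin n → ℝ)

lemma uslow_congr {ζ ζ' : ℕ → Fin n × Fin 3 → ℝ} {t : ℕ} (h : ∀ s ≤ t, ζ s = ζ' s) :
    uslow ubar Q ζ t = uslow ubar Q ζ' t := by
  rw [uslow, uslow, sum_congr rfl fun s hs => by rw [h s (mem_range_succ_iff.1 hs)]]

lemma xslow_congr {ζ ζ' : ℕ → Fin n × Fin 3 → ℝ} {t : ℕ} (h : ∀ s < t, ζ s = ζ' s) :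
    xslow Δ x0 ubar Q ζ t = xslow Δ x0 ubar Q ζ' t := by
  rw [xslow, xslow, sum_congr rfl fun s hs =>
    uslow_congr ubar Q fun r hr => h r (hr.trans_lt (mem_range.1 hs))]

lemma xslow_succ (ζ : ℕ → Fin n × Fin 3 → ℝ) (t : ℕ) :
    xslow Δ x0 ubar Q ζ (t + 1) = xslow Δ x0 ubar Q ζ t + Bmat n Δ *ᵥ uslow ubar Q ζ t := by
  rw [xslow, xslow, sum_range_succ, mulVec_add, add_assoc]

lemma uslow_spliceSample (k t : ℕ) :
    uslow ubar Q (spliceSample K ξ k t) t = ufast K ubar Q ξ k t := by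
  have hpast : ∑ s ∈ range t, Q t s *ᵥ spliceSample K ξ k t s
      = ∑ s ∈ range t, Q t s *ᵥ slowAvg K ξ s :=
    sum_congr rfl fun s hs => by rw [spliceSample, Function.update_of_ne (mem_range.1 hs).ne]
  rw [uslow, ufast, sum_range_succ, hpast, spliceSample, Function.update_self]
  abel

lemma xslow_spliceSample_succ (k t : ℕ) :
    xslow Δ x0 ubar Q (spliceSample K ξ k t) (t + 1)
      = xslow Δ x0 ubar Q (slowAvg K ξ) t + Bmat n Δ *ᵥ ufast K ubar Q ξ k t := by
  rw [xslow_succ, uslow_spliceSample, xslow_congr]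
  exact fun s hs => Function.update_of_ne hs.ne _ _

lemma uslow_slowAvg (hK : 0 < K) (t : ℕ) :
    uslow ubar Q (slowAvg K ξ) t = (K : ℝ)⁻¹ • ∑ k ∈ range K, ufast K ubar Q ξ k t := by
  have hK' : (K : ℝ) ≠ 0 := by positivity
  simp only [uslow, ufast, sum_add_distrib, sum_const, card_range, sum_range_succ _ t,
    ← Nat.cast_smul_eq_nsmul ℝ, smul_add, inv_smul_smul₀ hK']
  rw [slowAvg, mulVec_smul, mulVec_sum]
  abel

variable {ubar Q ξ Δ x0} in
lemma IsFastTrajectory.zero_eq_xslow_slowAvg {T : ℕ} {xf : ℕ → ℕ → Fin n → ℝ}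
    (hxf : IsFastTrajectory T K x0 (fun k t => Bmat n Δ *ᵥ ufast K ubar Q ξ k t) xf)
    (hK : 0 < K) {t : ℕ} (ht : t < T) : xf 0 t = xslow Δ x0 ubar Q (slowAvg K ξ) t := by
  simp only [hxf.zero_eq_add_sum_average ht, xslow, uslow_slowAvg ubar Q ξ hK, mulVec_sum,
    mulVec_smul]

end Policy

theorem statement_8_general {n T K : ℕ} (hK : 0 < K)
    {Ξ : Set (ℝ × (Fin T → Fin n × Fin 3 → ℝ))} (hΞ : Convex ℝ Ξ)
    {ξ : ℕ → ℕ → Fin n × Fin 3 → ℝ} (hξ : IsQuasiStationary K Ξ ξ)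
    {ubar : ℕ → Fin n × Fin 2 → ℝ} {Q : ℕ → ℕ → Matrix (Fin n × Fin 2) (Fin n × Fin 3) ℝ}
    {Δ : ℝ} {x0 : Fin n → ℝ} {xf : ℕ → ℕ → Fin n → ℝ}
    (hxf : IsFastTrajectory T K x0 (fun k t => Bmat n Δ *ᵥ ufast K ubar Q ξ k t) xf)
    (P : ℕ → (Fin n × Fin 2 → ℝ) → (Fin n × Fin 3 → ℝ) → Prop)
    {S : Set (Fin n → ℝ)} (hS : Convex ℝ S)
    (hslow : ∀ ζ : ℕ → Fin n × Fin 3 → ℝ, ((1 : ℝ), fun s : Fin T => ζ s) ∈ Ξ →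
      (∀ t < T, P t (uslow ubar Q ζ t) (ζ t)) ∧ ∀ t ≤ T, xslow Δ x0 ubar Q ζ t ∈ S) :
    (∀ t < T, ∀ k < K, P t (ufast K ubar Q ξ k t) (ξ k t)) ∧
      ∀ t < T, ∀ k ≤ K, xf k t ∈ S := by
  refine ⟨fun t ht k hk => ?_, fun t ht k hk => ?_⟩
  · have hP := (hslow _ (hξ.spliceSample_mem hΞ hk t)).1 t ht
    rwa [uslow_spliceSample, spliceSample, Function.update_self] at hP
  · have hstart := hxf.zero_eq_xslow_slowAvg hK ht
    refine hxf.mem_of_convex hS ht hk ?_ fun j hj => ?_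
    · rw [hstart]
      exact (hslow _ (hξ.slowAvg_mem hK hΞ)).2 t ht.le
    · rw [hstart, ← xslow_spliceSample_succ]
      exact (hslow _ (hξ.spliceSample_mem hΞ hj t)).2 (t + 1) ht

/-- Proposition 3: fast time-scale feasibility: if the
decentralized affine policy is feasible for the slow time-scale robust
constraints (voltage, inverter apparent power, storage power, and storage
state), then the fast time-scale trajectories it generates satisfy the same
constraints on the fast time-scale. -/
theorem statement_8 (n T K : ℕ) (hn : 0 < n) (hT : 0 < T) (hK : 0 < K)
    (Ξ : Set (ℝ × (Fin T → Fin n × Fin 3 → ℝ))) (hconv : Convex ℝ Ξ)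
    (ξ : ℕ → ℕ → Fin n × Fin 3 → ℝ)
    (hquasi : ∀ f : ℕ → ℕ, (∀ t, f t < K) →
      ((1 : ℝ), fun t : Fin T => ξ (f t) t) ∈ Ξ)
    (ubar : ℕ → Fin n × Fin 2 → ℝ)
    (Q : ℕ → ℕ → Matrix (Fin n × Fin 2) (Fin n × Fin 3) ℝ)
    (R X : Matrix (Fin n) (Fin n) ℝ) (v0 : ℝ)
    (Δ : ℝ) (hΔ : 0 < Δ) (x0 : Fin n → ℝ)
    (vlo2 vhi2 plo phi b sI : Fin n → ℝ) (hsI : ∀ i, 0 < sI i)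
    (xf : ℕ → ℕ → Fin n → ℝ)
    (hx00 : xf 0 0 = x0)
    (hstep : ∀ t < T, ∀ k < K,
      xf (k + 1) t
        = xf k t + (K : ℝ)⁻¹ • (Bmat n Δ).mulVec (ufast K ubar Q ξ k t))
    (hbdry : ∀ t, t + 1 < T → xf 0 (t + 1) = xf K t)
    (hslow : ∀ ζ : ℕ → Fin n × Fin 3 → ℝ,
      ((1 : ℝ), fun s : Fin T => ζ s) ∈ Ξ →
      (∀ t < T, ∀ i,
        (vlo2 i ≤ (Vu n R X).mulVec (uslow ubar Q ζ t) i
            + (Vxi n R X).mulVec (ζ t) i + v0 ^ 2 ∧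
          (Vu n R X).mulVec (uslow ubar Q ζ t) i
            + (Vxi n R X).mulVec (ζ t) i + v0 ^ 2 ≤ vhi2 i) ∧
        ((Smq n).mulVec (uslow ubar Q ζ t) i ^ 2
            + (SmI n).mulVec (ζ t) i ^ 2 ≤ sI i ^ 2) ∧
        (plo i ≤ (Smp n).mulVec (uslow ubar Q ζ t) i ∧
          (Smp n).mulVec (uslow ubar Q ζ t) i ≤ phi i)) ∧
      (∀ t ≤ T, ∀ i,
        0 ≤ xslow Δ x0 ubar Q ζ t i ∧ xslow Δ x0 ubar Q ζ t i ≤ b i)) :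
    (∀ t < T, ∀ k < K, ∀ i,
      (vlo2 i ≤ (Vu n R X).mulVec (ufast K ubar Q ξ k t) i
          + (Vxi n R X).mulVec (ξ k t) i + v0 ^ 2 ∧
        (Vu n R X).mulVec (ufast K ubar Q ξ k t) i
          + (Vxi n R X).mulVec (ξ k t) i + v0 ^ 2 ≤ vhi2 i) ∧
      ((Smq n).mulVec (ufast K ubar Q ξ k t) i ^ 2
          + (SmI n).mulVec (ξ k t) i ^ 2 ≤ sI i ^ 2) ∧
      (plo i ≤ (Smp n).mulVec (ufast K ubar Q ξ k t) i ∧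
        (Smp n).mulVec (ufast K ubar Q ξ k t) i ≤ phi i)) ∧
    (∀ t < T, ∀ k ≤ K, ∀ i, 0 ≤ xf k t i ∧ xf k t i ≤ b i) := by
  have hbox : Convex ℝ {x : Fin n → ℝ | ∀ i, 0 ≤ x i ∧ x i ≤ b i} := by
    simpa only [Set.Icc, Pi.le_def, Pi.zero_apply, ← forall_and] using convex_Icc (0 : Fin n → ℝ) b
  exact statement_8_general hK hconv hquasi ⟨hx00, hstep, hbdry⟩
    (fun _ u w => ∀ i,
      (vlo2 i ≤ (Vu n R X *ᵥ u) i + (Vxi n R X *ᵥ w) i + v0 ^ 2 ∧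
        (Vu n R X *ᵥ u) i + (Vxi n R X *ᵥ w) i + v0 ^ 2 ≤ vhi2 i) ∧
      (Smq n *ᵥ u) i ^ 2 + (SmI n *ᵥ w) i ^ 2 ≤ sI i ^ 2 ∧
      plo i ≤ (Smp n *ᵥ u) i ∧ (Smp n *ᵥ u) i ≤ phi i)
    hbox hslow
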